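/- Let p be a prime, let j ≥ 3 be an integer, and set n = T_p(j). If p = 2, then s_k(n) is not prime for any k ≥ 1. If p is odd, then s_k(n) is not prime for any k ≥ 1 with k ≠ (p − 1)/2. -/

import Mathlib

/-- The sequence `s_k(n)`: `s_0 = 1`, `s_1 = n + 1`, `s_{k+2} = n·s_{k+1} − s_k`. -/
def s (n : ℤ) : ℕ → ℤ
  | 0 => 1
  | 1 => n + 1
  | k + 2 => n * s n (k + 1) - s n k

/-- The sequence `r_k(n)`: `r_0 = 1`, `r_1 = n − 1`, `r_{k+2} = n·r_{k+1} − r_k`. -/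
def r (n : ℤ) : ℕ → ℤ
  | 0 => 1
  | 1 => n - 1
  | k + 2 => n * r n (k + 1) - r n k

/-- Dilated Chebyshev polynomials of the first kind: `T_0 = 2`, `T_1 = n`. -/
def T (n : ℤ) : ℕ → ℤ
  | 0 => 2
  | 1 => n
  | k + 2 => n * T n (k + 1) - T n k

/-- Dilated Chebyshev polynomials of the second kind: `U_0 = 1`, `U_1 = n`. -/
def U (n : ℤ) : ℕ → ℤ
  | 0 => 1
  | 1 => n
  | k + 2 => n * U n (k + 1) - U n k

/-!
Write `j = x + x⁻¹`, so that `s j k = x⁻ᵏ (x ^ (2k+1) - 1) / (x - 1)` and `T j p = x ^ p + x⁻ᵖ`.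

For `p = 2` there is the factorization `s (T j 2) k = s j k * r j k`, in which both factors have
absolute value greater than `1`.

For `p = 2q + 1`, expanding `(x ^ (p (2k+1)) - 1) / (x - 1)` in two ways gives
`s j q * s (T j p) k = s j k * s (T j (2k+1)) q`. If `s (T j p) k` is prime, then it does not
divide `s j k`, which is nonzero and smaller in absolute value, so `s j k ∣ s j q`. Modulo `s j k`
the sequence `s j` has period `2k + 1` and is odd under `i ↦ -i - 1`, so by size such a divisibility
forces `2k + 1 ∣ p`.

If a prime `p` divides an arbitrary `m`, then `T j m = T (T j (m / p)) p`, which reduces to the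
prime case.
-/

section Polynomials

open Polynomial

variable (R : Type*) [CommRing R]

/-- The rescaled Chebyshev polynomial of the fourth kind, whose value at `x + x⁻¹` is
`x⁻ᵏ (x ^ (2 * k + 1) - 1) / (x - 1)`. It extends `s` to all integer indices, which makes the
reflection `k ↦ -k - 1` available. -/
noncomputable def chebyshevW (k : ℤ) : R[X] := Chebyshev.S R k + Chebyshev.S R (k - 1)

/-- The rescaled Chebyshev polynomial of the third kind, whose value at `x + x⁻¹` is
`x⁻ᵏ (x ^ (2 * k + 1) + 1) / (x + 1)`. It extends `r` to all integer indices. -/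
noncomputable def chebyshevV (k : ℤ) : R[X] := Chebyshev.S R k - Chebyshev.S R (k - 1)

lemma chebyshevS_add (m n : ℤ) :
    Chebyshev.S R (m + n) =
      Chebyshev.S R m * Chebyshev.S R n - Chebyshev.S R (m - 1) * Chebyshev.S R (n - 1) := by
  induction n using Chebyshev.induct with
  | zero => simp
  | one => simp [Chebyshev.S_add_one, mul_comm]
  | add_two n ih1 ih2 =>
    have h1 := Chebyshev.S_add_two R (m + n)
    have h2 := Chebyshev.S_add_two R n
    have h3 := Chebyshev.S_add_one R n
    linear_combination (norm := ring_nf) h1 + X * ih1 - ih2 - Chebyshev.S R m * h2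
      + Chebyshev.S R (m - 1) * h3
  | neg_add_one n ih1 ih2 =>
    have h1 := Chebyshev.S_sub_one R (m - n)
    have h2 := Chebyshev.S_sub_one R (-n)
    have h3 := Chebyshev.S_sub_two R (-n)
    linear_combination (norm := ring_nf) h1 + X * ih1 - ih2 - Chebyshev.S R m * h2
      + Chebyshev.S R (m - 1) * h3

lemma chebyshevW_mul_chebyshevV (k : ℤ) :
    chebyshevW R k * chebyshevV R k = Chebyshev.S R (2 * k) := by
  rw [two_mul, chebyshevS_add, chebyshevW, chebyshevV]
  ring

lemma chebyshevW_one : chebyshevW R 1 = X + 1 := by simp [chebyshevW]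

lemma chebyshevW_add_two (k : ℤ) :
    chebyshevW R (k + 2) = X * chebyshevW R (k + 1) - chebyshevW R k := by
  have h := Chebyshev.S_add_one R k
  simp only [chebyshevW, Chebyshev.S_add_two, add_sub_cancel_right]
  rw [show k + 2 - 1 = k + 1 by ring]
  linear_combination h

lemma chebyshevV_add_two (k : ℤ) :
    chebyshevV R (k + 2) = X * chebyshevV R (k + 1) - chebyshevV R k := by
  have h := Chebyshev.S_add_one R k
  simp only [chebyshevV, Chebyshev.S_add_two, add_sub_cancel_right]
  rw [show k + 2 - 1 = k + 1 by ring]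
  linear_combination -h

lemma chebyshevW_neg_sub_one (k : ℤ) : chebyshevW R (-k - 1) = -chebyshevW R k := by
  rw [chebyshevW, chebyshevW, Chebyshev.S_neg_sub_one, show -k - 1 - 1 = -k - 2 by ring,
    Chebyshev.S_neg_sub_two]
  ring

lemma chebyshevC_mul_chebyshevS (c m : ℤ) :
    Chebyshev.C R c * Chebyshev.S R m = Chebyshev.S R (m + c) + Chebyshev.S R (m - c) := by
  induction c using Chebyshev.induct with
  | zero => simp [two_mul]
  | one => rw [Chebyshev.C_one, Chebyshev.S_add_one]; ring
  | add_two c ih1 ih2 =>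
    have h1 := Chebyshev.S_add_two R (m + c)
    have h2 := Chebyshev.S_sub_two R (m - c)
    rw [Chebyshev.C_add_two]
    linear_combination (norm := ring_nf) X * ih1 - ih2 - h1 - h2
  | neg_add_one c ih1 ih2 =>
    have h1 := Chebyshev.S_sub_one R (m - c)
    have h2 := Chebyshev.S_add_one R (m + c)
    rw [Chebyshev.C_sub_one]
    linear_combination (norm := ring_nf) X * ih1 - ih2 - h1 - h2

lemma chebyshevC_mul_chebyshevW (c m : ℤ) :
    Chebyshev.C R c * chebyshevW R m = chebyshevW R (m + c) + chebyshevW R (m - c) := by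
  have h0 := chebyshevC_mul_chebyshevS R c m
  have h1 := chebyshevC_mul_chebyshevS R c (m - 1)
  simp only [chebyshevW]
  linear_combination (norm := ring_nf) h0 + h1

lemma chebyshevW_comp_chebyshevC_two (k : ℕ) :
    (chebyshevW R k).comp (Chebyshev.C R 2) = chebyshevW R k * chebyshevV R k := by
  rw [chebyshevW_mul_chebyshevV]
  induction k using Nat.twoStepInduction with
  | zero => simp [chebyshevW]
  | one =>
    rw [Nat.cast_one, chebyshevW_one, add_comp, X_comp, one_comp, mul_one, Chebyshev.C_two,
      Chebyshev.S_two]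
    ring
  | more k ih0 ih1 =>
    have h := chebyshevC_mul_chebyshevS R 2 (2 * (k + 1))
    push_cast at ih1 ⊢
    rw [chebyshevW_add_two, sub_comp, mul_comp, X_comp, ih0, ih1]
    linear_combination (norm := ring_nf) h

/-- With `C (2 * a + 1) = x ^ (2 * a + 1) + x ^ (-(2 * a + 1))`, the factors are
`(x ^ (2 * a + 1) - 1) / (x - 1)` and
`(x ^ ((2 * a + 1) * (2 * b + 1)) - 1) / (x ^ (2 * a + 1) - 1)`, up to powers of `x`. -/
lemma chebyshevW_mul_chebyshevW_comp (a : ℤ) (b : ℕ) :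
    chebyshevW R a * (chebyshevW R b).comp (Chebyshev.C R (2 * a + 1)) =
      chebyshevW R (2 * a * b + a + b) := by
  induction b using Nat.twoStepInduction with
  | zero => simp [chebyshevW]
  | one =>
    have h := chebyshevC_mul_chebyshevW R (2 * a + 1) a
    have hneg := chebyshevW_neg_sub_one R a
    rw [Nat.cast_one, chebyshevW_one, add_comp, X_comp, one_comp]
    linear_combination (norm := ring_nf) h + hneg
  | more b ih0 ih1 =>
    have h := chebyshevC_mul_chebyshevW R (2 * a + 1) (2 * a * (b + 1) + a + (b + 1))
    push_cast at ih1 ⊢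
    rw [chebyshevW_add_two, sub_comp, mul_comp, X_comp]
    linear_combination (norm := ring_nf) Chebyshev.C R (2 * a + 1) * ih1 - ih0 + h

lemma chebyshevW_dvd_sub {k l m : ℤ} (h : 2 * k + 1 ∣ m - l) :
    chebyshevW R k ∣ chebyshevW R m - chebyshevW R l := by
  have periodic : Function.Periodic
      (fun i ↦ Ideal.Quotient.mk (Ideal.span {chebyshevW R k}) (chebyshevW R i)) (2 * k + 1) := by
    intro i
    rw [Ideal.Quotient.eq, Ideal.mem_span_singleton]
    have hmul := chebyshevC_mul_chebyshevW R (i + k + 1) k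
    have hneg := chebyshevW_neg_sub_one R i
    refine ⟨Chebyshev.C R (i + k + 1), ?_⟩
    linear_combination (norm := ring_nf) -hmul - hneg
  obtain ⟨t, ht⟩ := h
  rw [← Ideal.mem_span_singleton, ← Ideal.Quotient.eq, eq_add_of_sub_eq' ht, mul_comm]
  exact periodic.int_mul t l

end Polynomials

lemma s_add_two (n : ℤ) (k : ℕ) : s n (k + 2) = n * s n (k + 1) - s n k := rfl

lemma T_eq_eval (n : ℤ) (k : ℕ) : T n k = (Polynomial.Chebyshev.C ℤ k).eval n := by
  induction k using Nat.twoStepInduction with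
  | zero => simp [T]
  | one => simp [T]
  | more k ih0 ih1 =>
    push_cast at ih1 ⊢
    simp [T, Polynomial.Chebyshev.C_add_two, ih0, ih1]

lemma s_eq_eval (n : ℤ) (k : ℕ) : s n k = (chebyshevW ℤ k).eval n := by
  induction k using Nat.twoStepInduction with
  | zero => simp [s, chebyshevW]
  | one => simp [s, chebyshevW]
  | more k ih0 ih1 =>
    push_cast at ih1 ⊢
    simp [s, chebyshevW_add_two, ih0, ih1]

lemma r_eq_eval (n : ℤ) (k : ℕ) : r n k = (chebyshevV ℤ k).eval n := by
  induction k using Nat.twoStepInduction with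
  | zero => simp [r, chebyshevV]
  | one => simp [r, chebyshevV]
  | more k ih0 ih1 =>
    push_cast at ih1 ⊢
    simp [r, chebyshevV_add_two, ih0, ih1]

lemma T_mul (n : ℤ) (a b : ℕ) : T n (a * b) = T (T n b) a := by
  rw [T_eq_eval, Nat.cast_mul, Polynomial.Chebyshev.C_mul, Polynomial.eval_comp, ← T_eq_eval,
    ← T_eq_eval]

lemma s_T_two (n : ℤ) (k : ℕ) : s (T n 2) k = s n k * r n k := by
  have h := congrArg (Polynomial.eval n) (chebyshevW_comp_chebyshevC_two ℤ k)
  simpa [s_eq_eval, r_eq_eval, T_eq_eval] using h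

lemma s_mul_s_T (n : ℤ) (a b : ℕ) :
    s n a * s (T n (2 * a + 1)) b = s n (2 * a * b + a + b) := by
  have h := congrArg (Polynomial.eval n) (chebyshevW_mul_chebyshevW_comp ℤ a b)
  simpa [s_eq_eval, T_eq_eval] using h

lemma s_dvd_s_T_mul_s (n : ℤ) (k q : ℕ) : s n k ∣ s (T n (2 * q + 1)) k * s n q := by
  refine ⟨s (T n (2 * k + 1)) q, ?_⟩
  rw [mul_comm, s_mul_s_T, s_mul_s_T]
  congr 1
  ring

lemma strictMono_abs_of_recurrence {R : Type*} [CommRing R] [LinearOrder R]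
    [IsStrictOrderedRing R] {n : R} {u : ℕ → R} (hn : 2 ≤ |n|)
    (hu : ∀ k, u (k + 2) = n * u (k + 1) - u k) (h01 : |u 0| < |u 1|) :
    StrictMono fun k ↦ |u k| := by
  refine strictMono_nat_of_lt_succ fun k ↦ ?_
  induction k with
  | zero => exact h01
  | succ k ih =>
    calc |u (k + 1)| < 2 * |u (k + 1)| - |u k| := by linarith
      _ ≤ |n| * |u (k + 1)| - |u k| := by gcongr
      _ ≤ |n * u (k + 1) - u k| := by rw [← abs_mul]; exact abs_sub_abs_le_abs_sub _ _
      _ = |u (k + 2)| := by rw [hu]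

lemma strictMono_abs_s {n : ℤ} (hn : 3 ≤ |n|) : StrictMono fun k ↦ |s n k| :=
  strictMono_abs_of_recurrence (by linarith) (fun _ ↦ rfl) (by simp only [s]; grind)

lemma strictMono_abs_r {n : ℤ} (hn : 3 ≤ |n|) : StrictMono fun k ↦ |r n k| :=
  strictMono_abs_of_recurrence (by linarith) (fun _ ↦ rfl) (by simp only [r]; grind)

lemma strictMono_abs_T {n : ℤ} (hn : 3 ≤ |n|) : StrictMono fun k ↦ |T n k| :=
  strictMono_abs_of_recurrence (by linarith) (fun _ ↦ rfl) (by simp only [T]; grind)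

lemma s_ne_zero {n : ℤ} (hn : 3 ≤ |n|) (k : ℕ) : s n k ≠ 0 := by
  have h : |s n 0| ≤ |s n k| := (strictMono_abs_s hn).monotone k.zero_le
  rw [s, abs_one] at h
  exact abs_pos.mp (by linarith)

lemma one_lt_abs_s {n : ℤ} (hn : 3 ≤ |n|) {k : ℕ} (hk : k ≠ 0) : 1 < |s n k| := by
  simpa [s] using strictMono_abs_s hn hk.pos

lemma one_lt_abs_r {n : ℤ} (hn : 3 ≤ |n|) {k : ℕ} (hk : k ≠ 0) : 1 < |r n k| := by
  simpa [r] using strictMono_abs_r hn hk.pos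

lemma three_le_abs_T {n : ℤ} (hn : 3 ≤ |n|) {m : ℕ} (hm : m ≠ 0) : 3 ≤ |T n m| :=
  calc 3 ≤ |T n 1| := by rwa [T]
    _ ≤ |T n m| := (strictMono_abs_T hn).monotone (Nat.one_le_iff_ne_zero.mpr hm)

lemma abs_add_two_lt_abs_T {n : ℤ} (hn : 3 ≤ |n|) {m : ℕ} (hm : 2 ≤ m) :
    |n| + 2 < |T n m| :=
  calc |n| + 2 < |n| * |n| - 2 := by nlinarith
    _ = |n * n| - |2| := by rw [abs_mul, abs_two]
    _ ≤ |n * n - 2| := abs_sub_abs_le_abs_sub _ _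
    _ = |T n 2| := by simp only [T]
    _ ≤ |T n m| := (strictMono_abs_T hn).monotone hm

lemma abs_s_succ_bounds {n : ℤ} (hn : 3 ≤ |n|) (k : ℕ) :
    (|n| - 1) * |s n k| ≤ |s n (k + 1)| ∧ |s n (k + 1)| ≤ (|n| + 1) * |s n k| := by
  cases k with
  | zero => simp only [s]; grind
  | succ k =>
    have hmono : |s n k| < |s n (k + 1)| := strictMono_abs_s hn k.lt_succ_self
    have hlower := abs_sub_abs_le_abs_sub (n * s n (k + 1)) (s n k)
    have hupper := abs_sub (n * s n (k + 1)) (s n k)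
    rw [abs_mul, ← s_add_two] at hlower hupper
    constructor <;> linarith

lemma pow_le_abs_s {n : ℤ} (hn : 3 ≤ |n|) (k : ℕ) : (|n| - 1) ^ k ≤ |s n k| := by
  induction k with
  | zero => simp [s]
  | succ k ih =>
    calc (|n| - 1) ^ (k + 1) = (|n| - 1) * (|n| - 1) ^ k := pow_succ' _ _
      _ ≤ (|n| - 1) * |s n k| := mul_le_mul_of_nonneg_left ih (by linarith)
      _ ≤ |s n (k + 1)| := (abs_s_succ_bounds hn k).1

lemma abs_s_le_pow {n : ℤ} (hn : 3 ≤ |n|) (k : ℕ) : |s n k| ≤ (|n| + 1) ^ k := by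
  induction k with
  | zero => simp [s]
  | succ k ih =>
    calc |s n (k + 1)| ≤ (|n| + 1) * |s n k| := (abs_s_succ_bounds hn k).2
      _ ≤ (|n| + 1) * (|n| + 1) ^ k := by gcongr
      _ = (|n| + 1) ^ (k + 1) := (pow_succ' _ _).symm

lemma abs_s_lt_abs_s {m n : ℤ} (hm : 3 ≤ |m|) (hmn : |m| + 2 < |n|) {k : ℕ} (hk : k ≠ 0) :
    |s m k| < |s n k| :=
  calc |s m k| ≤ (|m| + 1) ^ k := abs_s_le_pow hm k
    _ < (|n| - 1) ^ k := pow_lt_pow_left₀ (by linarith) (by positivity) hk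
    _ ≤ |s n k| := pow_le_abs_s (by linarith) k

lemma not_dvd_s_of_abs_s_lt {n : ℤ} (hn : 3 ≤ |n|) {k : ℕ} {a : ℤ} (h : |s n k| < |a|) :
    ¬ a ∣ s n k := fun hdvd ↦
  s_ne_zero hn k (Int.eq_zero_of_abs_lt_dvd ((abs_dvd ..).mpr hdvd) h)

lemma exists_abs_s_eq_abs_eval_chebyshevW (n : ℤ) {k : ℕ} {i : ℤ} (hki : -k ≤ i) (hik : i < k) :
    ∃ l < k, |s n l| = |(chebyshevW ℤ i).eval n| := by
  obtain hi | hi := le_or_gt 0 i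
  · lift i to ℕ using hi
    exact ⟨i, by omega, by rw [s_eq_eval]⟩
  · obtain ⟨l, rfl⟩ : ∃ l : ℕ, i = -l - 1 := ⟨(-i - 1).toNat, by omega⟩
    exact ⟨l, by omega, by rw [s_eq_eval, chebyshevW_neg_sub_one, Polynomial.eval_neg, abs_neg]⟩

lemma two_mul_add_one_dvd_of_s_dvd_s {n : ℤ} (hn : 3 ≤ |n|) {k q : ℕ} (h : s n k ∣ s n q) :
    2 * k + 1 ∣ 2 * q + 1 := by
  let i := (q : ℤ).bmod (2 * k + 1)
  have hiq : 2 * (k : ℤ) + 1 ∣ i - q := by exact_mod_cast Int.dvd_bmod_sub_self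
  have hki : -(k : ℤ) ≤ i := by have := Int.le_bmod (x := q) (m := 2 * k + 1); omega
  have hik : i ≤ k := by have := Int.bmod_lt (x := q) (m := 2 * k + 1); omega
  have hdvd : s n k ∣ (chebyshevW ℤ i).eval n := by
    have hsub := Polynomial.eval_dvd (x := n) (chebyshevW_dvd_sub ℤ hiq)
    rw [Polynomial.eval_sub, ← s_eq_eval, ← s_eq_eval] at hsub
    exact (dvd_sub_left h).mp hsub
  have hik' : i = k := by
    refine hik.eq_or_lt.resolve_right fun hlt ↦ ?_
    obtain ⟨l, hlk, hl⟩ := exists_abs_s_eq_abs_eval_chebyshevW n hki hlt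
    refine not_dvd_s_of_abs_s_lt hn (strictMono_abs_s hn hlk) ?_
    rwa [← dvd_abs, hl, dvd_abs]
  rw [hik'] at hiq
  obtain ⟨c, hc⟩ := hiq
  zify
  exact ⟨1 - 2 * c, by linear_combination -2 * hc⟩

lemma ne_zero_of_prime_s {n : ℤ} {k : ℕ} (h : Prime (s n k)) : k ≠ 0 := by
  rintro rfl
  exact not_prime_one (by simpa only [s] using h)

lemma not_prime_s_T_two {n : ℤ} (hn : 3 ≤ |n|) (k : ℕ) : ¬ Prime (s (T n 2) k) := by
  intro h
  have hk := ne_zero_of_prime_s h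
  rw [s_T_two] at h
  rcases h.irreducible.isUnit_or_isUnit rfl with hs | hr
  · exact (one_lt_abs_s hn hk).ne' (Int.isUnit_iff_abs_eq.mp hs)
  · exact (one_lt_abs_r hn hk).ne' (Int.isUnit_iff_abs_eq.mp hr)

lemma two_mul_add_one_dvd_of_prime_s_T {n : ℤ} (hn : 3 ≤ |n|) {k q : ℕ} (hq : q ≠ 0)
    (h : Prime (s (T n (2 * q + 1)) k)) : 2 * k + 1 ∣ 2 * q + 1 := by
  have hlt : |s n k| < |s (T n (2 * q + 1)) k| :=
    abs_s_lt_abs_s hn (abs_add_two_lt_abs_T hn (by omega)) (ne_zero_of_prime_s h)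
  have hdvd : s n k ∣ s n q :=
    (h.left_dvd_or_dvd_right_of_dvd_mul (s_dvd_s_T_mul_s n k q)).resolve_left
      (not_dvd_s_of_abs_s_lt hn hlt)
  exact two_mul_add_one_dvd_of_s_dvd_s hn hdvd

lemma eq_two_mul_add_one_of_prime_s_T {n : ℤ} (hn : 3 ≤ |n|) {p k : ℕ} (hp : p.Prime)
    (h : Prime (s (T n p) k)) : p = 2 * k + 1 := by
  rcases hp.eq_two_or_odd' with rfl | ⟨q, rfl⟩
  · exact absurd h (not_prime_s_T_two hn k)
  · have hq : q ≠ 0 := by rintro rfl; exact hp.ne_one rfl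
    have hk : k ≠ 0 := ne_zero_of_prime_s h
    have hdvd := two_mul_add_one_dvd_of_prime_s_T hn hq h
    exact ((hp.eq_one_or_self_of_dvd _ hdvd).resolve_left (by omega)).symm

theorem s_composite_for_chebyshev_values_general {j : ℤ} (hj : 3 ≤ |j|) {m k : ℕ} (hm : m ≠ 0)
    (h : Prime (s (T j m) k)) {p : ℕ} (hp : p.Prime) (hpm : p ∣ m) : p = 2 * k + 1 := by
  obtain ⟨d, rfl⟩ := hpm
  rw [T_mul] at h
  exact eq_two_mul_add_one_of_prime_s_T (three_le_abs_T hj (right_ne_zero_of_mul hm)) hp h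

theorem s_composite_for_chebyshev_values (p : ℕ) (hp : p.Prime) (j : ℤ) (hj : 3 ≤ j) :
    (p = 2 → ∀ k : ℕ, 1 ≤ k → ¬ Prime (s (T j p) k)) ∧
    (Odd p → ∀ k : ℕ, 1 ≤ k → k ≠ (p - 1) / 2 → ¬ Prime (s (T j p) k)) := by
  have key (k : ℕ) (h : Prime (s (T j p) k)) : p = 2 * k + 1 :=
    s_composite_for_chebyshev_values_general (hj.trans (le_abs_self j)) hp.ne_zero h hp dvd_rfl
  exact ⟨fun _ k _ h ↦ by have := key k h; omega, fun _ k _ hk h ↦ by have := key k h; omega⟩
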